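/- For every positive integer k there exist a training set (E, λ) with E ⊆ ℝ^k and a reasonable decision tree T for (E, λ) with zero errors such that: (i) some sequence of subtree raising operations pruning exactly k inner nodes in total transforms T into a decision tree with zero errors on (E, λ); and (ii) for every j with 1 ≤ j < k, every decision tree obtained from T by subtree raising operations pruning exactly j inner nodes in total has at least one error on (E, λ). -/

import Mathlib

/-- The two class labels. -/
inductive Label where
  | blue
  | red
deriving DecidableEq

/-- A decision tree over examples `ι → ℝ` with classes `{blue, red}`:
every inner node carries a feature and a threshold, every leaf a class label.
An example goes to the left child if its value in the node's feature is at most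
the threshold, and to the right child otherwise. -/
inductive DTree (ι : Type) where
  | leaf (c : Label)
  | node (feat : ι) (thr : ℝ) (left right : DTree ι)

namespace DTree

variable {ι : Type}

/-- The class that a decision tree assigns to an example. -/
noncomputable def classify : DTree ι → (ι → ℝ) → Label
  | .leaf c, _ => c
  | .node f t l r, e => if e f ≤ t then l.classify e else r.classify e

/-- The routing path of an example (`false` = left child, `true` = right child);
it is the position of the leaf of the example. -/
noncomputable def route : DTree ι → (ι → ℝ) → List Bool
  | .leaf _, _ => []
  | .node f t l r, e => if e f ≤ t then false :: l.route e else true :: r.route e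

/-- The subtree rooted at a position (`none` if the position is not a node). -/
def subtreeAt : DTree ι → List Bool → Option (DTree ι)
  | T, [] => some T
  | .leaf _, _ :: _ => none
  | .node _ _ l r, b :: p => (if b then r else l).subtreeAt p

/-- Replace the subtree at a given position by another tree. -/
def replaceAt : DTree ι → List Bool → DTree ι → DTree ι
  | _, [], T' => T'
  | .leaf c, _ :: _, _ => .leaf c
  | .node f t l r, b :: p, T' =>
      if b then .node f t l (r.replaceAt p T') else .node f t (l.replaceAt p T') r

/-- The number of inner nodes of a decision tree. -/
def innerCount : DTree ι → ℕ
  | .leaf _ => 0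
  | .node _ _ l r => 1 + l.innerCount + r.innerCount

/-- The position `p` is an inner node of `T`. -/
def IsInnerPos (T : DTree ι) (p : List Bool) : Prop :=
  ∃ f t l r, T.subtreeAt p = some (.node f t l r)

/-- The position `p` is a node of `T`. -/
def IsNodePos (T : DTree ι) (p : List Bool) : Prop :=
  (T.subtreeAt p).isSome

/-- The feature and threshold of the inner node at position `p`. -/
def cutAt (T : DTree ι) (p : List Bool) : Option (ι × ℝ) :=
  match T.subtreeAt p with
  | some (.node f t _ _) => some (f, t)
  | _ => none

/-- The subtree raising operation at position `q` keeping the child in direction `b`: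
the subtree rooted at `q` is replaced by the subtree rooted at its `b`-child; it prunes
the node at `q` together with all inner nodes of the subtree rooted at the other child. -/
def raiseAt (T : DTree ι) (q : List Bool) (b : Bool) : DTree ι :=
  match T.subtreeAt q with
  | some (.node _ _ l r) => T.replaceAt q (if b then r else l)
  | _ => T

end DTree

/-- `E[T,p]`: the examples of `E` whose routing through `T` passes the position `p`. -/
noncomputable def reach {ι : Type} (E : Finset (ι → ℝ)) (T : DTree ι) (p : List Bool) :
    Finset (ι → ℝ) :=
  E.filter fun e => p <+: T.route e

/-- The number of errors of `T` on the training set `(E, lab)`. -/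
noncomputable def errCount {ι : Type} (T : DTree ι) (E : Finset (ι → ℝ))
    (lab : (ι → ℝ) → Label) : ℕ :=
  (E.filter fun e => T.classify e ≠ lab e).card

/-- A most frequent label of the labeled set `(E, lab)` (blue in case of a tie). -/
def majorityLabel {ι : Type} (E : Finset (ι → ℝ)) (lab : (ι → ℝ) → Label) : Label :=
  if (E.filter fun e => lab e = Label.red).card ≤ (E.filter fun e => lab e = Label.blue).card
  then Label.blue else Label.red

/-- One subtree replacement operation: some inner node of `T` is replaced by a leaf
labeled with a most frequent label of the examples reaching it. -/
def ReplStep {ι : Type} (E : Finset (ι → ℝ)) (lab : (ι → ℝ) → Label)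
    (T T' : DTree ι) : Prop :=
  ∃ p, T.IsInnerPos p ∧
    T' = T.replaceAt p (.leaf (majorityLabel (reach E T p) lab))

/-- `T` is a reasonable decision tree for `(E, lab)`: every node is reached by some
example and every leaf carries a most frequent label of the examples reaching it. -/
def Reasonable {ι : Type} (E : Finset (ι → ℝ)) (lab : (ι → ℝ) → Label)
    (T : DTree ι) : Prop :=
  (∀ p, T.IsNodePos p → (reach E T p).Nonempty) ∧
  (∀ p c, T.subtreeAt p = some (.leaf c) → ∀ c' : Label,
    ((reach E T p).filter fun e => lab e = c').card ≤
      ((reach E T p).filter fun e => lab e = c).card)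

/-- Apply a sequence of raising operations (given by positions and kept directions). -/
def applySeq {ι : Type} : DTree ι → List (List Bool × Bool) → DTree ι
  | T, [] => T
  | T, (q, b) :: rest => applySeq (T.raiseAt q b) rest

/-- Each raising operation of the sequence is applied at an inner node. -/
def ValidSeq {ι : Type} : DTree ι → List (List Bool × Bool) → Prop
  | _, [] => True
  | T, (q, b) :: rest => T.IsInnerPos q ∧ ValidSeq (T.raiseAt q b) rest

/-- The total number of inner nodes pruned by a sequence of raising operations. -/
def seqPruned {ι : Type} : DTree ι → List (List Bool × Bool) → ℕ
  | _, [] => 0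
  | T, (q, b) :: rest =>
      (match T.subtreeAt q with
        | some (.node _ _ l r) => 1 + DTree.innerCount (if b then l else r)
        | _ => 0) + seqPruned (T.raiseAt q b) rest

/-- `T'` is obtained from `T` by a (possibly empty) sequence of subtree raising
operations. -/
def RaisedFrom {ι : Type} (T T' : DTree ι) : Prop :=
  ∃ steps, ValidSeq T steps ∧ applySeq T steps = T'

/-- `T'` is obtained from `T` by a sequence of subtree raising operations pruning
exactly `m` inner nodes in total. -/
def RaisedFromPruning {ι : Type} (T : DTree ι) (m : ℕ) (T' : DTree ι) : Prop :=
  ∃ steps, ValidSeq T steps ∧ seqPruned T steps = m ∧ applySeq T steps = T'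

/-- Tracking the position of a node through one raising operation: nodes strictly
below the raised node on the discarded side, and the raised node itself, are pruned
(`none`); all other nodes survive at a possibly shifted position. -/
def stepMap (q : List Bool) (b : Bool) (p : List Bool) : Option (List Bool) :=
  if q <+: p then
    if q ++ [b] <+: p then some (q ++ p.drop (q.length + 1)) else none
  else some p

/-- Tracking the position of a node through a sequence of raising operations. -/
def seqMap : List (List Bool × Bool) → List Bool → Option (List Bool)
  | [], p => some p
  | (q, b) :: rest, p => (stepMap q b p).bind (seqMap rest)

/-- The number of errors of `T` on a multiset of labeled examples. -/
noncomputable def errCountM {ι : Type} (T : DTree ι) (E : Multiset ((ι → ℝ) × Label)) : ℕ :=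
  (E.filter fun q => T.classify q.1 ≠ q.2).card

namespace DTree

variable {ι : Type}

/-- Every inner node of the tree carries the feature `f`. -/
def UsesOnly (f : ι) : DTree ι → Prop
  | .leaf _ => True
  | .node g _ l r => g = f ∧ l.UsesOnly f ∧ r.UsesOnly f

theorem raiseAt_leaf (c : Label) (q : List Bool) (b : Bool) :
    (leaf c : DTree ι).raiseAt q b = leaf c := by
  cases q <;> rfl

theorem raiseAt_node_nil (f : ι) (t : ℝ) (l r : DTree ι) (b : Bool) :
    (node f t l r).raiseAt [] b = if b then r else l := rfl

theorem raiseAt_node_false (f : ι) (t : ℝ) (l r : DTree ι) (q : List Bool) (b : Bool) :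
    (node f t l r).raiseAt (false :: q) b = node f t (l.raiseAt q b) r := by
  simp only [raiseAt, subtreeAt, Bool.false_eq_true, if_false]
  split <;> simp_all [replaceAt]

theorem raiseAt_node_true (f : ι) (t : ℝ) (l r : DTree ι) (q : List Bool) (b : Bool) :
    (node f t l r).raiseAt (true :: q) b = node f t l (r.raiseAt q b) := by
  simp only [raiseAt, subtreeAt, if_true]
  split <;> simp_all [replaceAt]

theorem UsesOnly.raiseAt {f : ι} {T : DTree ι} (h : T.UsesOnly f) (q : List Bool) (b : Bool) :
    (T.raiseAt q b).UsesOnly f := by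
  induction q generalizing T with
  | nil =>
    cases T with
    | leaf c => exact h
    | node g t l r =>
      rw [raiseAt_node_nil]
      cases b
      exacts [h.2.1, h.2.2]
  | cons a q ih =>
    cases T with
    | leaf c => exact h
    | node g t l r =>
      cases a
      · rw [raiseAt_node_false]
        exact ⟨h.1, ih h.2.1, h.2.2⟩
      · rw [raiseAt_node_true]
        exact ⟨h.1, h.2.1, ih h.2.2⟩

theorem innerCount_raiseAt_add (T : DTree ι) (q : List Bool) (b : Bool) :
    (match T.subtreeAt q with
      | some (.node _ _ l r) => 1 + innerCount (if b then l else r)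
      | _ => 0) + (T.raiseAt q b).innerCount = T.innerCount := by
  induction q generalizing T with
  | nil =>
    cases T with
    | leaf c => simp [subtreeAt, raiseAt_leaf]
    | node f t l r =>
      cases b <;> simp only [subtreeAt, raiseAt_node_nil, innerCount] <;> grind
  | cons a q ih =>
    cases T with
    | leaf c => simp [subtreeAt, raiseAt_leaf]
    | node f t l r =>
      cases a
      · have := ih l
        rw [raiseAt_node_false]
        simp only [subtreeAt, innerCount, Bool.false_eq_true, if_false]
        omega
      · have := ih r
        rw [raiseAt_node_true]
        simp only [subtreeAt, innerCount, if_true]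
        omega

theorem innerCount_raiseAt_le (T : DTree ι) (q : List Bool) (b : Bool) :
    (T.raiseAt q b).innerCount ≤ T.innerCount :=
  (Nat.le_add_left _ _).trans_eq (innerCount_raiseAt_add T q b)

theorem seqPruned_add_innerCount (T : DTree ι) (steps : List (List Bool × Bool)) :
    seqPruned T steps + (applySeq T steps).innerCount = T.innerCount := by
  induction steps generalizing T with
  | nil => simp [seqPruned, applySeq]
  | cons s steps ih =>
    obtain ⟨q, b⟩ := s
    have h := innerCount_raiseAt_add T q b
    have h' := ih (T.raiseAt q b)
    simp only [seqPruned, applySeq]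
    omega

theorem classify_eq_of_prefix_route {T : DTree ι} {p : List Bool} {c : Label} {e : ι → ℝ}
    (hp : T.subtreeAt p = some (.leaf c)) (h : p <+: T.route e) : T.classify e = c := by
  induction p generalizing T with
  | nil => cases T <;> simp_all [subtreeAt, classify]
  | cons a p ih =>
    cases T with
    | leaf c => simp [subtreeAt] at hp
    | node f t l r =>
      simp only [route] at h
      simp only [subtreeAt] at hp
      simp only [classify]
      split_ifs at h ⊢ <;> obtain ⟨rfl, h'⟩ := List.cons_prefix_cons.1 h <;> exact ih hp h'

/-- The labels alternating along the natural numbers. -/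
def altLabel (n : ℕ) : Label := if Even n then .blue else .red

theorem altLabel_succ_ne (n : ℕ) : altLabel (n + 1) ≠ altLabel n := by
  by_cases h : Even n <;> simp [altLabel, h, Nat.even_add_one]

/-- A tree that uses a single feature and classifies consecutive integers alternately
has at least as many inner nodes as there are color changes. -/
theorem UsesOnly.le_innerCount_of_alternating {f : ι} {T : DTree ι} (hT : T.UsesOnly f)
    {e : ℕ → ι → ℝ} (he : ∀ x, e x f = x) {a b : ℕ}
    (h : ∀ x, a ≤ x → x ≤ b → T.classify (e x) = altLabel x) : b ≤ a + T.innerCount := by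
  induction T generalizing a b with
  | leaf c =>
    by_contra! hlt
    simp only [innerCount, add_zero] at hlt
    have h₀ := h a le_rfl hlt.le
    have h₁ := h (a + 1) a.le_succ hlt
    exact altLabel_succ_ne a (h₁.symm.trans h₀)
  | node g t l r ihl ihr =>
    obtain ⟨rfl, hl, hr⟩ := hT
    simp only [classify, he] at h
    simp only [innerCount]
    by_cases hb : (b : ℝ) ≤ t
    · have := ihl hl (a := a) (b := b) fun x hax hxb => by
        rw [← h x hax hxb, if_pos ((Nat.cast_le.2 hxb).trans hb)]
      omega
    by_cases ha : (a : ℝ) ≤ t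
    · have ht : 0 ≤ t := (Nat.cast_nonneg a).trans ha
      have han : a ≤ ⌊t⌋₊ := Nat.le_floor ha
      have hnb : ⌊t⌋₊ < b := (Nat.floor_lt ht).2 (not_le.1 hb)
      have h₁ := ihl hl (a := a) (b := ⌊t⌋₊) fun x hax hxn => by
        rw [← h x hax (hxn.trans hnb.le), if_pos ((Nat.le_floor_iff ht).1 hxn)]
      have h₂ := ihr hr (a := ⌊t⌋₊ + 1) (b := b) fun x hnx hxb => by
        rw [← h x (by omega) hxb, if_neg (not_le.2 ((Nat.floor_lt ht).1 hnx))]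
      omega
    · have := ihr hr (a := a) (b := b) fun x hax hxb => by
        rw [← h x hax hxb, if_neg fun hx => ha ((Nat.cast_le.2 hax).trans hx)]
      omega

/-- The chain of `n` cuts at `i, i + 1, …` in feature `f` whose leaves alternate. -/
noncomputable def chain (f : ι) : ℕ → ℕ → DTree ι
  | i, 0 => .leaf (altLabel i)
  | i, n + 1 => .node f i (.leaf (altLabel i)) (chain f (i + 1) n)

theorem innerCount_chain (f : ι) (i n : ℕ) : (chain f i n).innerCount = n := by
  induction n generalizing i with
  | zero => rfl
  | succ n ih => simp only [chain, innerCount, ih]; omega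

theorem usesOnly_chain (f : ι) (i n : ℕ) : (chain f i n).UsesOnly f := by
  induction n generalizing i with
  | zero => trivial
  | succ n ih => exact ⟨rfl, trivial, ih _⟩

theorem classify_chain {f : ι} {e : ℕ → ι → ℝ} {i n x : ℕ} (he : 0 < n → ∀ x, e x f = x)
    (hix : i ≤ x) (hxn : x ≤ i + n) : (chain f i n).classify (e x) = altLabel x := by
  induction n generalizing i with
  | zero =>
    obtain rfl : x = i := by omega
    rfl
  | succ n ih =>
    simp only [chain, classify, he n.succ_pos, Nat.cast_le]
    split_ifs with h
    · rw [le_antisymm h hix]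
    · exact ih (fun _ => he n.succ_pos) (by omega) (by omega)

theorem exists_prefix_route_chain {f : ι} {e : ℕ → ι → ℝ} {i n : ℕ}
    (he : 0 < n → ∀ x, e x f = x) {p : List Bool} (hp : (chain f i n).IsNodePos p) :
    ∃ x, i ≤ x ∧ x ≤ i + n ∧ p <+: (chain f i n).route (e x) := by
  induction n generalizing i p with
  | zero =>
    cases p with
    | nil => exact ⟨i, le_rfl, le_rfl, List.nil_prefix⟩
    | cons a p => simp [IsNodePos, chain, subtreeAt] at hp
  | succ n ih =>
    rcases p with _ | ⟨_ | _, p⟩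
    · exact ⟨i, le_rfl, by omega, List.nil_prefix⟩
    · refine ⟨i, le_rfl, by omega, ?_⟩
      cases p with
      | nil => simp [chain, route, he n.succ_pos]
      | cons a p => simp [IsNodePos, chain, subtreeAt] at hp
    · obtain ⟨x, hix, hxn, hx⟩ := ih (fun _ => he n.succ_pos) (i := i + 1) (p := p)
        (by simpa [IsNodePos, chain, subtreeAt] using hp)
      refine ⟨x, by omega, by omega, ?_⟩
      have : ¬ x ≤ i := by omega
      simpa [chain, route, he n.succ_pos, this] using hx

/-- The shape of the trees obtained from a cut `(f, t)` above two subtrees that only use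
the feature `g` and have at most `m` inner nodes. -/
def CutOrSmall (f g : ι) (t : ℝ) (m : ℕ) (T : DTree ι) : Prop :=
  T.innerCount ≤ m ∨ ∃ l r, T = .node f t l r ∧ l.UsesOnly g ∧ r.UsesOnly g ∧
    l.innerCount ≤ m ∧ r.innerCount ≤ m

theorem CutOrSmall.raiseAt {f g : ι} {t : ℝ} {m : ℕ} {T : DTree ι}
    (h : CutOrSmall f g t m T) (q : List Bool) (b : Bool) :
    CutOrSmall f g t m (T.raiseAt q b) := by
  rcases h with h | ⟨l, r, rfl, hl, hr, hlm, hrm⟩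
  · exact .inl ((innerCount_raiseAt_le T q b).trans h)
  rcases q with _ | ⟨_ | _, q⟩
  · rw [raiseAt_node_nil]
    cases b
    exacts [.inl hlm, .inl hrm]
  · exact .inr ⟨_, _, raiseAt_node_false .., hl.raiseAt q b, hr,
      (innerCount_raiseAt_le l q b).trans hlm, hrm⟩
  · exact .inr ⟨_, _, raiseAt_node_true .., hl, hr.raiseAt q b, hlm,
      (innerCount_raiseAt_le r q b).trans hrm⟩

theorem CutOrSmall.applySeq {f g : ι} {t : ℝ} {m : ℕ} {T : DTree ι}
    (h : CutOrSmall f g t m T) (steps : List (List Bool × Bool)) :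
    CutOrSmall f g t m (applySeq T steps) := by
  induction steps generalizing T with
  | nil => exact h
  | cons s steps ih => exact ih (h.raiseAt s.1 s.2)

end DTree

theorem errCount_eq_zero_iff {ι : Type} {T : DTree ι} {E : Finset (ι → ℝ)}
    {lab : (ι → ℝ) → Label} : errCount T E lab = 0 ↔ ∀ e ∈ E, T.classify e = lab e := by
  simp [errCount, Finset.filter_eq_empty_iff]

theorem reasonable_of_errCount_eq_zero {ι : Type} {T : DTree ι} {E : Finset (ι → ℝ)}
    {lab : (ι → ℝ) → Label} (h : errCount T E lab = 0)
    (hreach : ∀ p, T.IsNodePos p → ∃ e ∈ E, p <+: T.route e) : Reasonable E lab T := by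
  rw [errCount_eq_zero_iff] at h
  constructor
  · intro p hp
    obtain ⟨e, he, hpe⟩ := hreach p hp
    exact ⟨e, Finset.mem_filter.2 ⟨he, hpe⟩⟩
  · intro p c hp c'
    refine Finset.card_le_card fun e he => ?_
    have he' := (Finset.mem_filter.1 he).1
    obtain ⟨heE, hpe⟩ := Finset.mem_filter.1 he'
    exact Finset.mem_filter.2
      ⟨he', (h e heE).symm.trans (DTree.classify_eq_of_prefix_route hp hpe)⟩

/-- The point with value `0` or `1` in the first coordinate, according to the side `s`,
and value `x` in all other coordinates. -/
def sidedPoint (m : ℕ) (s : Bool) (x : ℕ) : Fin (m + 1) → ℝ :=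
  fun i => if i = 0 then (if s then 1 else 0) else x

theorem sidedPoint_last {m : ℕ} (s : Bool) (hm : 0 < m) (x : ℕ) :
    sidedPoint m s x (Fin.last m) = x := by
  have : Fin.last m ≠ 0 := by simpa [Fin.ext_iff] using hm.ne'
  simp [sidedPoint, this]

/-- The points `sidedPoint m s x` with `x ≤ m`. -/
noncomputable def sidedPoints (m : ℕ) : Finset (Fin (m + 1) → ℝ) :=
  (Finset.univ ×ˢ Finset.range (m + 1)).image fun q : Bool × ℕ => sidedPoint m q.1 q.2

theorem mem_sidedPoints {m : ℕ} {e : Fin (m + 1) → ℝ} :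
    e ∈ sidedPoints m ↔ ∃ s, ∃ x ≤ m, sidedPoint m s x = e := by
  simp [sidedPoints]

/-- A cut in the first feature with the same chain of `m` cuts on both sides. -/
noncomputable def doubleChain (m : ℕ) : DTree (Fin (m + 1)) :=
  .node 0 0 (.chain (Fin.last m) 0 m) (.chain (Fin.last m) 0 m)

theorem classify_chain_sidedPoint {m x : ℕ} (s : Bool) (hx : x ≤ m) :
    (DTree.chain (Fin.last m) 0 m).classify (sidedPoint m s x) = DTree.altLabel x :=
  DTree.classify_chain (sidedPoint_last s) x.zero_le (by omega)

theorem classify_node_sidedPoint {m x : ℕ} (s : Bool) (l r : DTree (Fin (m + 1))) :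
    (DTree.node 0 0 l r).classify (sidedPoint m s x)
      = (if s then r else l).classify (sidedPoint m s x) := by
  cases s <;> simp [DTree.classify, sidedPoint]

theorem classify_doubleChain_sidedPoint {m x : ℕ} (s : Bool) (hx : x ≤ m) :
    (doubleChain m).classify (sidedPoint m s x) = DTree.altLabel x := by
  rw [doubleChain, classify_node_sidedPoint, ite_self, classify_chain_sidedPoint s hx]

theorem exists_prefix_route_doubleChain {m : ℕ} {p : List Bool}
    (hp : (doubleChain m).IsNodePos p) :
    ∃ e ∈ sidedPoints m, p <+: (doubleChain m).route e := by
  rcases p with _ | ⟨s, p⟩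
  · exact ⟨_, mem_sidedPoints.2 ⟨false, 0, m.zero_le, rfl⟩, List.nil_prefix⟩
  · obtain ⟨x, -, hxm, hx⟩ := DTree.exists_prefix_route_chain (sidedPoint_last s) (p := p)
      (i := 0) (by simpa [DTree.IsNodePos, doubleChain, DTree.subtreeAt] using hp)
    refine ⟨_, mem_sidedPoints.2 ⟨s, x, by omega, rfl⟩, ?_⟩
    have h₀ : sidedPoint m s x 0 = if s then 1 else 0 := rfl
    cases s <;> simpa [doubleChain, DTree.route, h₀, not_le.2 (zero_lt_one' ℝ)] using hx

/-- For every positive integer `k` there are a training set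
`(E, lab)` with `E ⊆ ℝ^k` and a reasonable decision tree `T` for `(E, lab)` with
zero errors such that some sequence of subtree raising operations pruning exactly
`k` inner nodes in total transforms `T` into a decision tree with zero errors,
while for every `1 ≤ j < k`, every decision tree obtained from `T` by subtree
raising operations pruning exactly `j` inner nodes in total has at least one
error on `(E, lab)`. -/
theorem stmt11 (k : ℕ) (hk : 1 ≤ k) :
    ∃ (E : Finset (Fin k → ℝ)) (lab : (Fin k → ℝ) → Label) (T : DTree (Fin k)),
      Reasonable E lab T ∧ errCount T E lab = 0
      ∧ (∃ T', RaisedFromPruning T k T' ∧ errCount T' E lab = 0)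
      ∧ (∀ j : ℕ, 1 ≤ j → j < k →
          ∀ T', RaisedFromPruning T j T' → 1 ≤ errCount T' E lab) := by
  obtain ⟨m, rfl⟩ : ∃ m, k = m + 1 := ⟨k - 1, by omega⟩
  have hcount : (doubleChain m).innerCount = 1 + m + m := by
    simp [doubleChain, DTree.innerCount, DTree.innerCount_chain]
  have h₀ : errCount (doubleChain m) (sidedPoints m) (doubleChain m).classify = 0 :=
    errCount_eq_zero_iff.2 fun _ _ => rfl
  refine ⟨sidedPoints m, (doubleChain m).classify, doubleChain m,
    reasonable_of_errCount_eq_zero h₀ fun _ => exists_prefix_route_doubleChain, h₀,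
    ⟨.chain (Fin.last m) 0 m, ⟨[([], true)], ⟨⟨_, _, _, _, rfl⟩, trivial⟩, ?_, rfl⟩, ?_⟩, ?_⟩
  · simp [seqPruned, doubleChain, DTree.subtreeAt, DTree.innerCount_chain, add_comm]
  · refine errCount_eq_zero_iff.2 fun e he => ?_
    obtain ⟨s, x, hx, rfl⟩ := mem_sidedPoints.1 he
    rw [classify_chain_sidedPoint s hx, classify_doubleChain_sidedPoint s hx]
  · rintro j hj hjm _ ⟨steps, -, hpruned, rfl⟩
    rw [Nat.one_le_iff_ne_zero]
    intro herr
    rw [errCount_eq_zero_iff] at herr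
    have hsum := DTree.seqPruned_add_innerCount (doubleChain m) steps
    have hchain := DTree.usesOnly_chain (Fin.last m) 0 m
    have hle := (DTree.innerCount_chain (Fin.last m) 0 m).le
    have hshape : DTree.CutOrSmall 0 (Fin.last m) 0 m (doubleChain m) :=
      .inr ⟨_, _, rfl, hchain, hchain, hle, hle⟩
    rcases hshape.applySeq steps with hsmall | ⟨l, r, hT, hl, hr, -, -⟩
    · omega
    rw [hT] at herr hsum
    have hclass : ∀ s : Bool, ∀ x ≤ m,
        (if s then r else l).classify (sidedPoint m s x) = DTree.altLabel x := fun s x hx => by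
      rw [← classify_node_sidedPoint, herr _ (mem_sidedPoints.2 ⟨s, x, hx, rfl⟩),
        classify_doubleChain_sidedPoint s hx]
    have hlm := hl.le_innerCount_of_alternating (sidedPoint_last false (by omega))
      (a := 0) (b := m) fun x _ hx => hclass false x hx
    have hrm := hr.le_innerCount_of_alternating (sidedPoint_last true (by omega))
      (a := 0) (b := m) fun x _ hx => hclass true x hx
    simp only [DTree.innerCount] at hsum
    omega
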